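/- arXiv:0709.0516 — 3 statements merged into one kernel-verified Lean document; each statement's English description precedes it below -/
import Mathlib

section
/- For all real P > 0 and N₀ > 0: if κ ∈ [0, 1), there exists a unique ĝ ∈ (0, ∞) with Δ(ĝ) = 0, and moreover Δ(g) > 0 for all 0 ≤ g < ĝ and Δ(g) < 0 for all g > ĝ (so the primary spreads if its incident gain is below ĝ and shares if it is above ĝ); if κ = 1, then Δ(g) > 0 for all g ≥ 0 (so the primary always spreads). -/
/-!
Write `u` for the noise plus interference seen by the primary. Since
`(1 + P/(2u))² = (1 + P/u) (1 + (P/2)²/(u(u + P)))`, the advantage of spreading equals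
`½ log (1 + (P/2)²/(u(u + P))) + (1 - κ)/2 · (log (1 + P/u) - log (1 + P/N₀))`.
The first summand is positive and strictly decreasing in `u`. The second vanishes at `u = N₀` and,
for `κ ≤ 1`, decreases to `-(1 - κ)/2 · log (1 + P/N₀)`; this limit is negative when `κ < 1`, so
there is exactly one sign change. For `κ ≥ 1` the second summand is nonnegative on `u ≥ N₀`.
-/

open Filter Set Topology

theorem exists_threshold_of_strictAntiOn {α β : Type*}
    [ConditionallyCompleteLinearOrder α] [DenselyOrdered α] [TopologicalSpace α] [OrderTopology α]
    [LinearOrder β] [TopologicalSpace β] [OrderClosedTopology β] {f : α → β} {a b : α} {c : β}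
    (hanti : StrictAntiOn f (Ici a)) (hcont : ContinuousOn f (Ici a))
    (hab : a ≤ b) (ha : c < f a) (hb : f b < c) :
    ∃ x₀, a < x₀ ∧ f x₀ = c ∧ (∀ x, a ≤ x → x < x₀ → c < f x) ∧ (∀ x, x₀ < x → f x < c) ∧
      (∀ x, a < x → f x = c → x = x₀) := by
  obtain ⟨x₀, hx₀, rfl⟩ :=
    intermediate_value_Ioo' hab (hcont.mono Icc_subset_Ici_self) ⟨hb, ha⟩
  have hax₀ : a < x₀ := hx₀.1
  exact ⟨x₀, hax₀, rfl, fun x hx hlt => hanti hx hax₀.le hlt,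
    fun x hlt => hanti hax₀.le (hax₀.trans hlt).le hlt,
    fun x hx heq => hanti.injOn hx.le hax₀.le heq⟩

/-- The rate `log (1 + S / u)`, in nats, of a Gaussian channel with signal power `S` and total
noise (thermal noise plus interference) of power `u`. It is meaningful for `0 < u`. -/
noncomputable def gaussianRate (S u : ℝ) : ℝ :=
  Real.log (1 + S / u)

section GaussianRate

variable {S u : ℝ}

theorem gaussianRate_pos (hS : 0 < S) (hu : 0 < u) : 0 < gaussianRate S u :=
  Real.log_pos (lt_add_of_pos_right 1 (div_pos hS hu))

theorem strictAntiOn_gaussianRate (hS : 0 < S) : StrictAntiOn (gaussianRate S) (Ioi 0) := by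
  intro u (hu : 0 < u) v (hv : 0 < v) huv
  unfold gaussianRate
  gcongr

theorem continuousOn_gaussianRate (hS : 0 ≤ S) : ContinuousOn (gaussianRate S) (Ioi 0) := by
  refine ContinuousOn.log ?_ fun u (hu : 0 < u) => by positivity
  exact continuousOn_const.add (continuousOn_const.div continuousOn_id fun u hu => ne_of_gt hu)

theorem tendsto_gaussianRate_atTop (S : ℝ) : Tendsto (gaussianRate S) atTop (𝓝 0) := by
  have hsnr : Tendsto (fun u : ℝ => 1 + S / u) atTop (𝓝 1) := by
    simpa only [id, add_zero] using (tendsto_id.const_div_atTop S).const_add 1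
  exact Real.log_one ▸ hsnr.log one_ne_zero

theorem two_mul_gaussianRate_half (hS : 0 ≤ S) (hu : 0 < u) :
    2 * gaussianRate (S / 2) u =
      gaussianRate S u + gaussianRate ((S / 2) ^ 2) (u * (u + S)) := by
  have hfactor : (1 + S / 2 / u) ^ 2 = (1 + S / u) * (1 + (S / 2) ^ 2 / (u * (u + S))) := by
    have : u + S ≠ 0 := by positivity
    field_simp
    ring
  unfold gaussianRate
  rw [← Real.log_mul (by positivity) (by positivity), ← hfactor, Real.log_pow, Nat.cast_ofNat]

end GaussianRate

/-- The primary's rate per subchannel when both users spread their power `P` evenly, minus its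
expected rate when it concentrates its power in one subchannel. Here `N` is the noise level, `u` the
noise plus interference, and `κ` the belief that the secondary answers concentration by spreading
rather than by moving to the other subchannel. In the notation of the paper,
`Δ(g) = spreadAdvantage P N₀ κ (N₀ + g P / 2)`. -/
noncomputable def spreadAdvantage (P N κ u : ℝ) : ℝ :=
  gaussianRate (P / 2) u - ((1 - κ) / 2 * gaussianRate P N + κ / 2 * gaussianRate P u)

section SpreadAdvantage

variable {P N κ u : ℝ}

theorem spreadAdvantage_eq (hP : 0 ≤ P) (hu : 0 < u) :
    spreadAdvantage P N κ u = gaussianRate ((P / 2) ^ 2) (u * (u + P)) / 2 +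
      (1 - κ) / 2 * (gaussianRate P u - gaussianRate P N) := by
  unfold spreadAdvantage
  linear_combination two_mul_gaussianRate_half hP hu / 2

theorem strictAntiOn_spreadAdvantage (hP : 0 < P) (hκ : κ ≤ 1) :
    StrictAntiOn (spreadAdvantage P N κ) (Ioi 0) := by
  intro u (hu : 0 < u) v (hv : 0 < v) huv
  have hexcess : gaussianRate ((P / 2) ^ 2) (v * (v + P)) <
      gaussianRate ((P / 2) ^ 2) (u * (u + P)) :=
    strictAntiOn_gaussianRate (by positivity) (mem_Ioi.2 (by positivity))
      (mem_Ioi.2 (by positivity)) (by gcongr)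
  have hrate : gaussianRate P v ≤ gaussianRate P u :=
    (strictAntiOn_gaussianRate hP hu hv huv).le
  have hweight : 0 ≤ (1 - κ) / 2 := by linarith
  rw [spreadAdvantage_eq hP.le hu, spreadAdvantage_eq hP.le hv]
  exact add_lt_add_of_lt_of_le (div_lt_div_of_pos_right hexcess two_pos)
    (mul_le_mul_of_nonneg_left (sub_le_sub_right hrate _) hweight)

theorem continuousOn_spreadAdvantage (hP : 0 ≤ P) :
    ContinuousOn (spreadAdvantage P N κ) (Ioi 0) :=
  (continuousOn_gaussianRate (by positivity)).sub
    (continuousOn_const.add (continuousOn_const.mul (continuousOn_gaussianRate hP)))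

theorem tendsto_spreadAdvantage_atTop (P N κ : ℝ) :
    Tendsto (spreadAdvantage P N κ) atTop (𝓝 (-((1 - κ) / 2 * gaussianRate P N))) := by
  unfold spreadAdvantage
  simpa only [mul_zero, add_zero, zero_sub] using (tendsto_gaussianRate_atTop (P / 2)).sub
    (((tendsto_gaussianRate_atTop P).const_mul (κ / 2)).const_add
      ((1 - κ) / 2 * gaussianRate P N))

theorem eventually_spreadAdvantage_neg (hP : 0 < P) (hN : 0 < N) (hκ : κ < 1) :
    ∀ᶠ u in atTop, spreadAdvantage P N κ u < 0 :=
  (tendsto_spreadAdvantage_atTop P N κ).eventually_lt_const <|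
    neg_neg_of_pos (mul_pos (half_pos (sub_pos.2 hκ)) (gaussianRate_pos hP hN))

theorem spreadAdvantage_pos_of_mul_nonneg (hP : 0 < P) (hu : 0 < u)
    (h : 0 ≤ (1 - κ) / 2 * (gaussianRate P u - gaussianRate P N)) :
    0 < spreadAdvantage P N κ u := by
  rw [spreadAdvantage_eq hP.le hu]
  exact add_pos_of_pos_of_nonneg
    (half_pos (gaussianRate_pos (by positivity) (by positivity))) h

theorem spreadAdvantage_self_pos (hP : 0 < P) (hN : 0 < N) : 0 < spreadAdvantage P N κ N :=
  spreadAdvantage_pos_of_mul_nonneg hP hN (by rw [sub_self, mul_zero])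

theorem spreadAdvantage_pos_of_one_le (hP : 0 < P) (hN : 0 < N) (hNu : N ≤ u) (hκ : 1 ≤ κ) :
    0 < spreadAdvantage P N κ u := by
  have hu : 0 < u := hN.trans_le hNu
  have hrate : gaussianRate P u ≤ gaussianRate P N :=
    (strictAntiOn_gaussianRate hP).antitoneOn hN hu hNu
  exact spreadAdvantage_pos_of_mul_nonneg hP hu
    (mul_nonneg_of_nonpos_of_nonpos (by linarith) (sub_nonpos.2 hrate))

end SpreadAdvantage

theorem stmt_16_general (P N₀ κ : ℝ) (hP : 0 < P) (hN₀ : 0 < N₀) (Δ : ℝ → ℝ)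
    (hΔ : ∀ g, Δ g = Real.log (1 + (P / 2) / (N₀ + g * P / 2)) -
      ((1 - κ) / 2 * Real.log (1 + P / N₀) +
        κ / 2 * Real.log (1 + P / (N₀ + g * P / 2)))) :
    (κ < 1 → ∃ g₀ : ℝ, 0 < g₀ ∧ Δ g₀ = 0 ∧
      (∀ g, 0 ≤ g → g < g₀ → 0 < Δ g) ∧ (∀ g, g₀ < g → Δ g < 0) ∧
      (∀ g', 0 < g' → Δ g' = 0 → g' = g₀)) ∧
    (1 ≤ κ → ∀ g, 0 ≤ g → 0 < Δ g) := by
  let noise : ℝ → ℝ := fun g => N₀ + g * P / 2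
  obtain rfl : Δ = spreadAdvantage P N₀ κ ∘ noise := funext hΔ
  have hnoise_ge {g : ℝ} (hg : 0 ≤ g) : N₀ ≤ noise g := le_add_of_nonneg_right (by positivity)
  refine ⟨fun hκ => ?_, fun hκ g hg => spreadAdvantage_pos_of_one_le hP hN₀ (hnoise_ge hg) hκ⟩
  have hnoise_maps : MapsTo noise (Ici 0) (Ioi 0) := fun g hg => hN₀.trans_le (hnoise_ge hg)
  have hnoise_mono : StrictMono noise := fun g g' hlt => by dsimp only [noise]; gcongr
  have hnoise_top : Tendsto noise atTop atTop :=
    tendsto_atTop_add_const_left _ _ ((tendsto_id.atTop_mul_const hP).atTop_div_const two_pos)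
  have hnoise_cont : Continuous noise := by fun_prop
  have hzero : 0 < spreadAdvantage P N₀ κ (noise 0) := by
    simpa [noise] using spreadAdvantage_self_pos hP hN₀
  obtain ⟨b, hb_neg, hb⟩ := ((hnoise_top.eventually
    (eventually_spreadAdvantage_neg hP hN₀ hκ)).and (eventually_ge_atTop 0)).exists
  exact exists_threshold_of_strictAntiOn
    ((strictAntiOn_spreadAdvantage hP hκ.le).comp_strictMonoOn
      (hnoise_mono.strictMonoOn _) hnoise_maps)
    ((continuousOn_spreadAdvantage hP.le).comp hnoise_cont.continuousOn hnoise_maps)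
    hb hzero hb_neg

/-- For `κ ∈ [0, 1)` there is a unique threshold `g₀ ∈ (0, ∞)` where `Δ` vanishes; `Δ` is
positive below it and negative above it (the primary spreads below `g₀` and shares above).
For `κ = 1`, `Δ` is positive everywhere (the primary always spreads). -/
theorem stmt_16 (P N₀ κ : ℝ) (hP : 0 < P) (hN₀ : 0 < N₀) (hκ : κ ∈ Set.Icc (0:ℝ) 1)
    (Δ : ℝ → ℝ)
    (hΔ : ∀ g, Δ g = Real.log (1 + (P / 2) / (N₀ + g * P / 2)) -
      ((1 - κ) / 2 * Real.log (1 + P / N₀) +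
        κ / 2 * Real.log (1 + P / (N₀ + g * P / 2)))) :
    (κ < 1 → ∃ g₀ : ℝ, 0 < g₀ ∧ Δ g₀ = 0 ∧
      (∀ g, 0 ≤ g → g < g₀ → 0 < Δ g) ∧ (∀ g, g₀ < g → Δ g < 0) ∧
      (∀ g', 0 < g' → Δ g' = 0 → g' = g₀)) ∧
    (κ = 1 → ∀ g, 0 ≤ g → 0 < Δ g) :=
  (stmt_16_general P N₀ κ hP hN₀ Δ hΔ).imp_right fun hpos hκ_eq => hpos hκ_eq.ge
end

section
/- For all real P > 0, N₀ > 0 and α ∈ (0, 1], the function h(g) = α·log(1 + (P/2)/(N₀ + g·P/2)) + (1 − α)·S(g), where S(g) = (1/2)·log(1 + P/(2·N₀)) + (1/2)·log(1 + (P/2)/(N₀ + g·P)) for g ≤ 1/2 and S(g) = (1/2)·log(1 + P/N₀) for g > 1/2, is continuous on (0, ∞) and strictly decreasing on (0, ∞) (i.e., 0 < g < g' implies h(g) > h(g')). -/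
/-!
While the primary shares, the secondary's best response switches at `g = 1/2` from spreading to
sharing. The chain rule `log (1 + s / n) + log (1 + t / (n + s)) = log (1 + (s + t) / n)` with
`s = t = P / 2` shows that the two rates agree at `g = 1/2`, so the piecewise rate is the spreading
rate evaluated at `min g (1/2)`. It is therefore continuous and nonincreasing, and averaging it
with the strictly decreasing rate against a spreading primary gives strict decrease as soon as the
latter has positive weight.
-/

open Set

theorem mapsTo_min_right_Ici_Ici {β : Type*} [LinearOrder β] {a b : β} (hab : a ≤ b) :
    MapsTo (fun x ↦ min x b) (Ici a) (Ici a) :=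
  fun _ hx ↦ mem_Ici.2 (le_min hx hab)

/-- The rate `log (1 + s / n)`, in nats, of a Gaussian channel with received signal power `s` and
total noise-plus-interference power `n`. -/
noncomputable def awgnRate (s n : ℝ) : ℝ :=
  Real.log (1 + s / n)

section AwgnRate

variable {s t n c : ℝ}

theorem continuousOn_awgnRate (hs : 0 ≤ s) : ContinuousOn (awgnRate s) (Ioi 0) := by
  refine ContinuousOn.log (continuousOn_const.add
    (continuousOn_const.div continuousOn_id fun n (hn : 0 < n) ↦ hn.ne')) fun n (hn : 0 < n) ↦ ?_
  positivity

theorem strictAntiOn_awgnRate (hs : 0 < s) : StrictAntiOn (awgnRate s) (Ioi 0) := by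
  intro m (hm : 0 < m) n (hn : 0 < n) hmn
  refine Real.log_lt_log (by positivity) ?_
  gcongr

theorem awgnRate_add_awgnRate (hs : 0 ≤ s) (ht : 0 ≤ t) (hn : 0 < n) :
    awgnRate s n + awgnRate t (n + s) = awgnRate (s + t) n := by
  unfold awgnRate
  rw [← Real.log_mul (by positivity) (by positivity)]
  congr 1
  field_simp
  ring

theorem mapsTo_add_mul_Ici_Ioi (hn : 0 < n) (hc : 0 ≤ c) :
    MapsTo (fun g : ℝ ↦ n + g * c) (Ici 0) (Ioi 0) :=
  fun _ (hg : 0 ≤ _) ↦ add_pos_of_pos_of_nonneg hn (mul_nonneg hg hc)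

theorem continuousOn_awgnRate_add_mul (hs : 0 ≤ s) (hn : 0 < n) (hc : 0 ≤ c) :
    ContinuousOn (fun g ↦ awgnRate s (n + g * c)) (Ici 0) :=
  (continuousOn_awgnRate hs).comp (by fun_prop) (mapsTo_add_mul_Ici_Ioi hn hc)

theorem strictAntiOn_awgnRate_add_mul (hs : 0 < s) (hn : 0 < n) (hc : 0 < c) :
    StrictAntiOn (fun g ↦ awgnRate s (n + g * c)) (Ici 0) :=
  (strictAntiOn_awgnRate hs).comp_strictMonoOn
    (fun _ _ _ _ hab ↦ by gcongr) (mapsTo_add_mul_Ici_Ioi hn hc.le)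

end AwgnRate

/-- The secondary's rate when both users spread the power `P` evenly over the two subchannels, at
interference gain `g`. -/
noncomputable def spreadRate (P N₀ g : ℝ) : ℝ :=
  awgnRate (P / 2) (N₀ + g * (P / 2))

/-- The secondary's rate when it spreads while the primary puts all of its power `P` on a single
subchannel: one subchannel is free of interference, the other sees interference `g * P`. -/
noncomputable def spreadAgainstShareRate (P N₀ g : ℝ) : ℝ :=
  1 / 2 * awgnRate (P / 2) N₀ + 1 / 2 * awgnRate (P / 2) (N₀ + g * P)

/-- The secondary's rate against a sharing primary: it spreads for `g ≤ 1/2`, and for `g > 1/2` it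
puts its whole power on the subchannel that the primary leaves free. -/
noncomputable def responseToShareRate (P N₀ g : ℝ) : ℝ :=
  if g ≤ 1 / 2 then spreadAgainstShareRate P N₀ g else 1 / 2 * awgnRate P N₀

/-- The secondary's expected rate upon entry, where `α` is the probability that the primary
spreads. -/
noncomputable def expectedEntryRate (P N₀ α g : ℝ) : ℝ :=
  α * spreadRate P N₀ g + (1 - α) * responseToShareRate P N₀ g

section EntryRate

variable {P N₀ α : ℝ}

theorem continuousOn_spreadRate (hP : 0 ≤ P) (hN₀ : 0 < N₀) :
    ContinuousOn (spreadRate P N₀) (Ici 0) :=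
  continuousOn_awgnRate_add_mul (by positivity) hN₀ (by positivity)

theorem strictAntiOn_spreadRate (hP : 0 < P) (hN₀ : 0 < N₀) :
    StrictAntiOn (spreadRate P N₀) (Ici 0) :=
  strictAntiOn_awgnRate_add_mul (half_pos hP) hN₀ (half_pos hP)

theorem continuousOn_spreadAgainstShareRate (hP : 0 ≤ P) (hN₀ : 0 < N₀) :
    ContinuousOn (spreadAgainstShareRate P N₀) (Ici 0) :=
  continuousOn_const.add <|
    continuousOn_const.mul <| continuousOn_awgnRate_add_mul (by positivity) hN₀ hP

theorem strictAntiOn_spreadAgainstShareRate (hP : 0 < P) (hN₀ : 0 < N₀) :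
    StrictAntiOn (spreadAgainstShareRate P N₀) (Ici 0) := by
  intro a ha b hb hab
  have hrate := strictAntiOn_awgnRate_add_mul (half_pos hP) hN₀ hP ha hb hab
  unfold spreadAgainstShareRate
  gcongr

theorem spreadAgainstShareRate_half (hP : 0 ≤ P) (hN₀ : 0 < N₀) :
    spreadAgainstShareRate P N₀ (1 / 2) = 1 / 2 * awgnRate P N₀ := by
  have hP_half : 0 ≤ P / 2 := by positivity
  have hchain : awgnRate (P / 2) N₀ + awgnRate (P / 2) (N₀ + P / 2) = awgnRate P N₀ := by
    rw [awgnRate_add_awgnRate hP_half hP_half hN₀, add_halves]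
  rw [spreadAgainstShareRate, ← hchain, one_div_mul_eq_div 2 P, mul_add]

theorem responseToShareRate_eq_min (hP : 0 ≤ P) (hN₀ : 0 < N₀) (g : ℝ) :
    responseToShareRate P N₀ g = spreadAgainstShareRate P N₀ (min g (1 / 2)) := by
  rw [responseToShareRate, ← spreadAgainstShareRate_half hP hN₀, min_def,
    apply_ite (spreadAgainstShareRate P N₀)]

theorem continuousOn_responseToShareRate (hP : 0 ≤ P) (hN₀ : 0 < N₀) :
    ContinuousOn (responseToShareRate P N₀) (Ici 0) := by
  rw [funext (responseToShareRate_eq_min hP hN₀)]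
  exact (continuousOn_spreadAgainstShareRate hP hN₀).comp (by fun_prop)
    (mapsTo_min_right_Ici_Ici one_half_pos.le)

theorem antitoneOn_responseToShareRate (hP : 0 < P) (hN₀ : 0 < N₀) :
    AntitoneOn (responseToShareRate P N₀) (Ici 0) := by
  rw [funext (responseToShareRate_eq_min hP.le hN₀)]
  exact (strictAntiOn_spreadAgainstShareRate hP hN₀).antitoneOn.comp_MonotoneOn
    (fun _ _ _ _ hab ↦ min_le_min_right _ hab) (mapsTo_min_right_Ici_Ici one_half_pos.le)

theorem continuousOn_expectedEntryRate (hP : 0 ≤ P) (hN₀ : 0 < N₀) :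
    ContinuousOn (expectedEntryRate P N₀ α) (Ici 0) :=
  (continuousOn_const.mul (continuousOn_spreadRate hP hN₀)).add
    (continuousOn_const.mul (continuousOn_responseToShareRate hP hN₀))

theorem strictAntiOn_expectedEntryRate (hP : 0 < P) (hN₀ : 0 < N₀) (hα : α ∈ Ioc 0 1) :
    StrictAntiOn (expectedEntryRate P N₀ α) (Ici 0) := by
  intro a ha b hb hab
  have hspread := strictAntiOn_spreadRate hP hN₀ ha hb hab
  have hresponse := antitoneOn_responseToShareRate hP hN₀ ha hb hab.le
  exact add_lt_add_of_lt_of_le (mul_lt_mul_of_pos_left hspread hα.1)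
    (mul_le_mul_of_nonneg_left hresponse (sub_nonneg.mpr hα.2))

end EntryRate

/-- The secondary user's expected rate upon entry, `h(g) = α·Π₂^spread(g) + (1 − α)·S(g)`,
is continuous and strictly decreasing on `(0, ∞)`. -/
theorem stmt_18 (P N₀ α : ℝ) (hP : 0 < P) (hN₀ : 0 < N₀) (hα : α ∈ Set.Ioc (0:ℝ) 1)
    (S h : ℝ → ℝ)
    (hS : ∀ g, S g = if g ≤ 1/2 then
        (1/2) * Real.log (1 + P / (2 * N₀)) + (1/2) * Real.log (1 + (P / 2) / (N₀ + g * P))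
      else (1/2) * Real.log (1 + P / N₀))
    (hh : ∀ g, h g = α * Real.log (1 + (P / 2) / (N₀ + g * P / 2)) + (1 - α) * S g) :
    ContinuousOn h (Set.Ioi 0) ∧ StrictAntiOn h (Set.Ioi 0) := by
  have hS_eq (g : ℝ) : S g = responseToShareRate P N₀ g := by
    rw [hS, responseToShareRate, spreadAgainstShareRate]
    simp only [awgnRate, div_div]
  have h_eq : h = expectedEntryRate P N₀ α := by
    funext g
    rw [hh, hS_eq, expectedEntryRate, spreadRate, awgnRate, mul_div_assoc]
  rw [h_eq]
  exact ⟨(continuousOn_expectedEntryRate hP.le hN₀).mono Ioi_subset_Ici_self,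
    (strictAntiOn_expectedEntryRate hP hN₀ hα).mono Ioi_subset_Ici_self⟩
end

section
/- The function V has increasing differences in (s₁, s₂): for all s₁, s₁' ∈ [0, P] and s₂, s₂' ∈ [−P, 0] with s₁ ≤ s₁' and s₂ ≤ s₂', one has V(s₁', s₂') − V(s₁, s₂') ≥ V(s₁', s₂) − V(s₁, s₂). (This is the supermodularity property of the reparametrized two-subchannel unknown-channel Gaussian interference game.) -/
open MeasureTheory

/-!
The integrand is the sum of two Gaussian capacities `½ log (1 + x / n)`, where `x` is the received
power and `n` the total noise. Since `log (1 + x / n) = log (n + x) - log n`, the increment from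
`x` to `x'` is `log (n + x') - log (n + x)`, which decreases in `n` because
`(n + x') * (n' + x) - (n' + x') * (n + x) = (n' - n) * (x' - x)`: thus the capacity has increasing
differences in `(x, -n)`. In the first subchannel `x` and `-n` both increase with `s₁` and `s₂`;
in the second both decrease; either way increasing differences survive, and they are then
integrated.
-/

section IncreasingDifferences

variable {α β γ δ E : Type*} [Preorder α] [Preorder β] [Preorder γ] [Preorder δ]

/-- A function `f` of two variables has increasing differences on `A × B` if each increment of `f`
in its first variable grows with the second one. On a product of two chains this is
supermodularity. -/
def IncreasingDifferencesOn [Sub E] [LE E] (f : α → β → E) (A : Set α) (B : Set β) : Prop :=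
  ∀ a ∈ A, ∀ a' ∈ A, ∀ b ∈ B, ∀ b' ∈ B, a ≤ a' → b ≤ b' → f a' b - f a b ≤ f a' b' - f a b'

namespace IncreasingDifferencesOn

variable {A : Set α} {B : Set β} {C : Set γ} {D : Set δ}

theorem comp_monotoneOn [Sub E] [LE E] {f : γ → δ → E} {φ : α → γ} {ψ : β → δ}
    (hf : IncreasingDifferencesOn f C D) (hφ : MonotoneOn φ A) (hψ : MonotoneOn ψ B)
    (hφC : Set.MapsTo φ A C) (hψD : Set.MapsTo ψ B D) :
    IncreasingDifferencesOn (fun a b => f (φ a) (ψ b)) A B :=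
  fun _ ha _ ha' _ hb _ hb' haa' hbb' =>
    hf _ (hφC ha) _ (hφC ha') _ (hψD hb) _ (hψD hb') (hφ ha ha' haa') (hψ hb hb' hbb')

variable [AddCommGroup E] [PartialOrder E] [IsOrderedAddMonoid E]

theorem comp_antitoneOn {f : γ → δ → E} {φ : α → γ} {ψ : β → δ}
    (hf : IncreasingDifferencesOn f C D) (hφ : AntitoneOn φ A) (hψ : AntitoneOn ψ B)
    (hφC : Set.MapsTo φ A C) (hψD : Set.MapsTo ψ B D) :
    IncreasingDifferencesOn (fun a b => f (φ a) (ψ b)) A B := by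
  intro a ha a' ha' b hb b' hb' haa' hbb'
  have h := hf _ (hφC ha') _ (hφC ha) _ (hψD hb') _ (hψD hb) (hφ ha ha' haa') (hψ hb hb' hbb')
  simpa only [neg_sub] using neg_le_neg h

theorem add {f g : α → β → E} (hf : IncreasingDifferencesOn f A B)
    (hg : IncreasingDifferencesOn g A B) :
    IncreasingDifferencesOn (fun a b => f a b + g a b) A B := by
  intro a ha a' ha' b hb b' hb' haa' hbb'
  simpa only [add_sub_add_comm] using
    add_le_add (hf a ha a' ha' b hb b' hb' haa' hbb') (hg a ha a' ha' b hb b' hb' haa' hbb')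

end IncreasingDifferencesOn

theorem IncreasingDifferencesOn.integral [NormedAddCommGroup E] [NormedSpace ℝ E]
    [PartialOrder E] [IsOrderedAddMonoid E] [IsOrderedModule ℝ E] [ClosedIciTopology E]
    {Ω : Type*} [MeasurableSpace Ω] {μ : Measure Ω} {F : Ω → α → β → E} {A : Set α} {B : Set β}
    (hF : ∀ᵐ ω ∂μ, IncreasingDifferencesOn (F ω) A B)
    (hint : ∀ a ∈ A, ∀ b ∈ B, Integrable (fun ω => F ω a b) μ) :
    IncreasingDifferencesOn (fun a b => ∫ ω, F ω a b ∂μ) A B := by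
  intro a ha a' ha' b hb b' hb' haa' hbb'
  dsimp only
  rw [← integral_sub (hint a' ha' b hb) (hint a ha b hb),
    ← integral_sub (hint a' ha' b' hb') (hint a ha b' hb')]
  refine integral_mono_ae ((hint a' ha' b hb).sub (hint a ha b hb))
    ((hint a' ha' b' hb').sub (hint a ha b' hb')) ?_
  filter_upwards [hF] with ω hω
  exact hω a ha a' ha' b hb b' hb' haa' hbb'

end IncreasingDifferences

section GaussianCapacity

/-- The capacity, in nats per use, of the real Gaussian channel with received power `x` and noise
power `n`. In an interference channel, `n` includes the power received from the other players. -/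
noncomputable def gaussianCapacity (x n : ℝ) : ℝ :=
  1 / 2 * Real.log (1 + x / n)

variable {x x' n n' : ℝ}

theorem gaussianCapacity_nonneg (hx : 0 ≤ x) (hn : 0 ≤ n) : 0 ≤ gaussianCapacity x n :=
  mul_nonneg one_half_pos.le (Real.log_nonneg (le_add_of_nonneg_right (div_nonneg hx hn)))

theorem gaussianCapacity_le_div (hx : 0 ≤ x) (hn : 0 ≤ n) : gaussianCapacity x n ≤ x / n := by
  have hxn : 0 ≤ x / n := div_nonneg hx hn
  have hlog : Real.log (1 + x / n) ≤ x / n := by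
    linarith [Real.log_le_sub_one_of_pos (show 0 < 1 + x / n by positivity)]
  unfold gaussianCapacity
  linarith

theorem gaussianCapacity_eq_log_sub_log (hx : 0 ≤ x) (hn : 0 < n) :
    gaussianCapacity x n = 1 / 2 * (Real.log (n + x) - Real.log n) := by
  rw [gaussianCapacity, one_add_div hn.ne', Real.log_div (by positivity) hn.ne']

theorem gaussianCapacity_sub_le_sub (hx : 0 ≤ x) (hxx' : x ≤ x') (hn : 0 < n) (hnn' : n ≤ n') :
    gaussianCapacity x' n' - gaussianCapacity x n' ≤
      gaussianCapacity x' n - gaussianCapacity x n := by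
  have hx' : 0 ≤ x' := hx.trans hxx'
  have hn' : 0 < n' := hn.trans_le hnn'
  have hmul : (n' + x') * (n + x) ≤ (n + x') * (n' + x) := by
    linarith [mul_nonneg (sub_nonneg.2 hnn') (sub_nonneg.2 hxx')]
  have hlog : Real.log (n' + x') + Real.log (n + x) ≤ Real.log (n + x') + Real.log (n' + x) := by
    rw [← Real.log_mul (by positivity) (by positivity),
      ← Real.log_mul (by positivity) (by positivity)]
    exact Real.log_le_log (by positivity) hmul
  simp only [gaussianCapacity_eq_log_sub_log, hx, hx', hn, hn']
  linarith

theorem increasingDifferencesOn_gaussianCapacity_neg :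
    IncreasingDifferencesOn (fun x z => gaussianCapacity x (-z)) (Set.Ici 0) (Set.Iio 0) :=
  fun _ hx _ _ _ _ _ hz' hxx' hzz' =>
    gaussianCapacity_sub_le_sub hx hxx' (neg_pos.2 hz') (neg_le_neg hzz')

theorem integrable_gaussianCapacity {Ω : Type*} [MeasurableSpace Ω] {μ : Measure Ω}
    {X Z : Ω → ℝ} {N : ℝ} (hN : 0 < N) (hX : Integrable X μ) (hX_nonneg : 0 ≤ᵐ[μ] X)
    (hZ : AEMeasurable Z μ) (hNZ : ∀ᵐ ω ∂μ, N ≤ Z ω) :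
    Integrable (fun ω => gaussianCapacity (X ω) (Z ω)) μ := by
  have hmeas : AEMeasurable (fun ω => gaussianCapacity (X ω) (Z ω)) μ :=
    ((hX.aemeasurable.div hZ).const_add 1).log.const_mul (1 / 2)
  refine (hX.div_const N).mono' hmeas.aestronglyMeasurable ?_
  filter_upwards [hX_nonneg, hNZ] with ω hXω hNZω
  have hZω : 0 ≤ Z ω := hN.le.trans hNZω
  rw [Real.norm_of_nonneg (gaussianCapacity_nonneg hXω hZω)]
  calc gaussianCapacity (X ω) (Z ω) ≤ X ω / Z ω := gaussianCapacity_le_div hXω hZω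
    _ ≤ X ω / N := div_le_div_of_nonneg_left hXω hN hNZω

end GaussianCapacity

section InterferenceGame

variable {P N₀ : ℝ}

theorem increasingDifferencesOn_gaussianCapacity_add (hN₀ : 0 < N₀) {g h : ℝ} (hg : 0 ≤ g)
    (hh : 0 ≤ h) :
    IncreasingDifferencesOn
      (fun s₁ s₂ => gaussianCapacity (g * s₁) (N₀ + h * (-s₂)) +
        gaussianCapacity (g * (P - s₁)) (N₀ + h * (P + s₂)))
      (Set.Icc 0 P) (Set.Icc (-P) 0) := by
  have h_noise_pos : ∀ {t : ℝ}, 0 ≤ t → -(N₀ + h * t) < 0 := fun ht =>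
    neg_neg_of_pos (add_pos_of_pos_of_nonneg hN₀ (mul_nonneg hh ht))
  have h_first := increasingDifferencesOn_gaussianCapacity_neg.comp_monotoneOn
    (φ := fun s₁ => g * s₁) (ψ := fun s₂ => -(N₀ + h * (-s₂)))
    (A := Set.Icc 0 P) (B := Set.Icc (-P) 0)
    (fun _ _ _ _ hs => by dsimp only; gcongr) (fun _ _ _ _ hs => by dsimp only; gcongr)
    (fun _ hs => mul_nonneg hg hs.1) (fun _ hs => h_noise_pos (neg_nonneg.2 hs.2))
  have h_second := increasingDifferencesOn_gaussianCapacity_neg.comp_antitoneOn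
    (φ := fun s₁ => g * (P - s₁)) (ψ := fun s₂ => -(N₀ + h * (P + s₂)))
    (A := Set.Icc 0 P) (B := Set.Icc (-P) 0)
    (fun _ _ _ _ hs => by dsimp only; gcongr) (fun _ _ _ _ hs => by dsimp only; gcongr)
    (fun _ hs => mul_nonneg hg (sub_nonneg.2 hs.2))
    (fun _ hs => h_noise_pos (neg_le_iff_add_nonneg'.1 hs.1))
  simpa only [neg_neg] using h_first.add h_second

variable {Ω : Type*} [MeasurableSpace Ω] {μ : Measure Ω} {g11 g21 : Ω → ℝ}

theorem integrable_gaussianCapacity_gain_mul (hN₀ : 0 < N₀) (hg11 : Integrable g11 μ)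
    (hg21 : AEMeasurable g21 μ) (hg11_nonneg : 0 ≤ᵐ[μ] g11) (hg21_nonneg : 0 ≤ᵐ[μ] g21)
    {s t : ℝ} (hs : 0 ≤ s) (ht : 0 ≤ t) :
    Integrable (fun ω => gaussianCapacity (g11 ω * s) (N₀ + g21 ω * t)) μ :=
  integrable_gaussianCapacity hN₀ (hg11.mul_const s)
    (hg11_nonneg.mono fun _ h => mul_nonneg h hs) ((hg21.mul_const t).const_add N₀)
    (hg21_nonneg.mono fun _ h => le_add_of_nonneg_right (mul_nonneg h ht))

theorem stmt_19_general (hN₀ : 0 < N₀) (hg11 : Integrable g11 μ) (hg21 : AEMeasurable g21 μ)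
    (hg11_nonneg : 0 ≤ᵐ[μ] g11) (hg21_nonneg : 0 ≤ᵐ[μ] g21) :
    IncreasingDifferencesOn
      (fun s₁ s₂ => ∫ ω, ((1 / 2) * Real.log (1 + g11 ω * s₁ / (N₀ + g21 ω * (-s₂))) +
        (1 / 2) * Real.log (1 + g11 ω * (P - s₁) / (N₀ + g21 ω * (P + s₂)))) ∂μ)
      (Set.Icc 0 P) (Set.Icc (-P) 0) := by
  refine IncreasingDifferencesOn.integral ?_ fun s₁ hs₁ s₂ hs₂ => ?_
  · filter_upwards [hg11_nonneg, hg21_nonneg] with ω hg hh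
    exact increasingDifferencesOn_gaussianCapacity_add hN₀ hg hh
  · have h_int {s t : ℝ} (hs : 0 ≤ s) (ht : 0 ≤ t) :=
      integrable_gaussianCapacity_gain_mul hN₀ hg11 hg21 hg11_nonneg hg21_nonneg hs ht
    exact (h_int hs₁.1 (neg_nonneg.2 hs₂.2)).add
      (h_int (sub_nonneg.2 hs₁.2) (neg_le_iff_add_nonneg'.1 hs₂.1))

end InterferenceGame

/-- The reparametrized payoff `V` of the two-subchannel unknown-channel Gaussian
interference game has increasing differences in `(s₁, s₂)` (supermodularity). -/
theorem stmt_19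
    {Ω : Type*} [MeasurableSpace Ω] (μ : Measure Ω) [IsProbabilityMeasure μ]
    (P N₀ a b : ℝ) (hP : 0 < P) (hN₀ : 0 < N₀) (ha : 0 < a) (hab : a ≤ b)
    (g11 g21 : Ω → ℝ) (hg11 : Measurable g11) (hg21 : Measurable g21)
    (hg11b : ∀ ω, a ≤ g11 ω ∧ g11 ω ≤ b) (hg21b : ∀ ω, a ≤ g21 ω ∧ g21 ω ≤ b)
    (V : ℝ → ℝ → ℝ)
    (hV : ∀ s₁ s₂, V s₁ s₂ =
      ∫ ω, ((1/2) * Real.log (1 + g11 ω * s₁ / (N₀ + g21 ω * (-s₂))) +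
            (1/2) * Real.log (1 + g11 ω * (P - s₁) / (N₀ + g21 ω * (P + s₂)))) ∂μ) :
    ∀ s₁ ∈ Set.Icc (0:ℝ) P, ∀ s₁' ∈ Set.Icc (0:ℝ) P,
      ∀ s₂ ∈ Set.Icc (-P) (0:ℝ), ∀ s₂' ∈ Set.Icc (-P) (0:ℝ),
        s₁ ≤ s₁' → s₂ ≤ s₂' →
          V s₁' s₂ - V s₁ s₂ ≤ V s₁' s₂' - V s₁ s₂' := by
  obtain rfl : V = _ := funext₂ hV
  exact stmt_19_general hN₀
    (.of_bound hg11.aestronglyMeasurable b (.of_forall fun ω =>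
      abs_le.2 ⟨by linarith [(hg11b ω).1], (hg11b ω).2⟩))
    hg21.aemeasurable (.of_forall fun ω => ha.le.trans (hg11b ω).1)
    (.of_forall fun ω => ha.le.trans (hg21b ω).1)
end
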